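/- arXiv:2001.02055 — 6 statements merged into one kernel-verified Lean document; each statement's English description precedes it below -/
import Mathlib

section
/- Let D and N be positive integers and let (φ_n)_{n=1}^N be unit vectors in a D-dimensional complex inner product space H. Then ∑_{n=1}^N ∑_{n'=1}^N |⟨φ_n, φ_{n'}⟩|² ≥ N²/D, and equality holds if and only if (φ_n)_{n=1}^N is a tight frame for H, i.e. ∑_{n=1}^N ⟨φ_n, y⟩ φ_n = (N/D)·y for every y ∈ H. -/
open scoped BigOperators

theorem aux_key {H : Type*} [NormedAddCommGroup H] [InnerProductSpace ℂ H]
    (D N : ℕ) (hD : 0 < D) (b : OrthonormalBasis (Fin D) ℂ H)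
    (φ : Fin N → H) (hunit : ∀ n, ‖φ n‖ = 1) :
    ∑ i, ‖(∑ n, (inner ℂ (φ n) (b i) : ℂ) • φ n) - ((N : ℂ) / (D : ℂ)) • b i‖ ^ 2 =
      (∑ n, ∑ n', ‖(inner ℂ (φ n) (φ n') : ℂ)‖ ^ 2) - (N : ℝ) ^ 2 / (D : ℝ) := by
  have hD' : (D : ℝ) ≠ 0 := by positivity
  set c : ℝ := (N : ℝ) / D with hc
  have hcc : ((N : ℂ) / (D : ℂ)) = (c : ℂ) := by simp [hc]
  rw [hcc]
  have h1 : ∑ i, (inner ℂ (∑ n, (inner ℂ (φ n) (b i) : ℂ) • φ n) (b i) : ℂ) = N := by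
    simp only [sum_inner, inner_smul_left, inner_conj_symm]
    rw [Finset.sum_comm]
    have : ∀ n, ∑ i, (inner ℂ (b i) (φ n) : ℂ) * inner ℂ (φ n) (b i) = 1 := by
      intro n
      have h := b.sum_inner_mul_inner (φ n) (φ n)
      rw [inner_self_eq_norm_sq_to_K, hunit] at h
      simp only [mul_comm] at h ⊢
      simpa using h
    simp [this]
  have h2 : ∑ i, (inner ℂ (∑ n, (inner ℂ (φ n) (b i) : ℂ) • φ n)
      (∑ n, (inner ℂ (φ n) (b i) : ℂ) • φ n) : ℂ)
      = ((∑ n, ∑ n', ‖(inner ℂ (φ n) (φ n') : ℂ)‖ ^ 2 : ℝ) : ℂ) := by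
    simp only [sum_inner, inner_sum, inner_smul_left, inner_smul_right, inner_conj_symm]
    rw [Finset.sum_comm]
    push_cast
    refine Finset.sum_congr rfl fun n _ => ?_
    simp only [Finset.mul_sum]
    rw [Finset.sum_comm]
    refine Finset.sum_congr rfl fun m _ => ?_
    have h := b.sum_inner_mul_inner (φ n) (φ m)
    have h3 : ((‖(inner ℂ (φ n) (φ m) : ℂ)‖ : ℂ)) ^ 2
        = inner ℂ (φ n) (φ m) * inner ℂ (φ m) (φ n) := by
      rw [← inner_conj_symm (φ m) (φ n), Complex.mul_conj']
    rw [h3, ← h, Finset.sum_mul]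
    refine Finset.sum_congr rfl fun i _ => ?_
    ring
  have h1' := congrArg Complex.re h1
  have h2' := congrArg Complex.re h2
  rw [Complex.re_sum] at h1' h2'
  rw [Complex.ofReal_re] at h2'
  rw [Complex.natCast_re] at h1'
  have h4 : ∀ i, ‖(∑ n, (inner ℂ (φ n) (b i) : ℂ) • φ n) - (c : ℂ) • b i‖ ^ 2
      = (inner ℂ (∑ n, (inner ℂ (φ n) (b i) : ℂ) • φ n)
      (∑ n, (inner ℂ (φ n) (b i) : ℂ) • φ n) : ℂ).re
       - 2 * c * (inner ℂ (∑ n, (inner ℂ (φ n) (b i) : ℂ) • φ n) (b i) : ℂ).re + c ^ 2 := by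
    intro i
    generalize (∑ n, (inner ℂ (φ n) (b i) : ℂ) • φ n) = v
    have h5 : (inner ℂ v v : ℂ).re = ‖v‖ ^ 2 := inner_self_eq_norm_sq (𝕜 := ℂ) v
    rw [@norm_sub_sq ℂ, h5, inner_smul_right, norm_smul, b.orthonormal.1 i]
    simp
    ring
  simp only [h4]
  rw [Finset.sum_add_distrib, Finset.sum_sub_distrib, ← Finset.mul_sum, h1', h2']
  simp only [Finset.sum_const, Finset.card_univ, Fintype.card_fin, nsmul_eq_mul, hc]
  field_simp
  ring

/-- For unit vectors `φ 1, …, φ N` in a `D`-dimensional complex inner product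
space `H`, one has `∑ₙ ∑ₙ' |⟨φ n, φ n'⟩|² ≥ N²/D`, with equality if and only if
`(φ n)` is a tight frame for `H`, i.e. `∑ₙ ⟨φ n, y⟩ • φ n = (N/D) • y` for all `y`. -/
theorem stmt0 {H : Type*} [NormedAddCommGroup H] [InnerProductSpace ℂ H]
    [FiniteDimensional ℂ H] (D N : ℕ) (hD : 0 < D) (hN : 0 < N)
    (hdim : Module.finrank ℂ H = D)
    (φ : Fin N → H) (hunit : ∀ n, ‖φ n‖ = 1) :
    (N : ℝ) ^ 2 / (D : ℝ) ≤ ∑ n, ∑ n', ‖(inner ℂ (φ n) (φ n') : ℂ)‖ ^ 2 ∧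
    ((∑ n, ∑ n', ‖(inner ℂ (φ n) (φ n') : ℂ)‖ ^ 2 = (N : ℝ) ^ 2 / (D : ℝ)) ↔
      ∀ y : H, ∑ n, (inner ℂ (φ n) y : ℂ) • φ n = ((N : ℂ) / (D : ℂ)) • y) := by
  have hb := aux_key D N hD ((stdOrthonormalBasis ℂ H).reindex (finCongr hdim)) φ hunit
  generalize (stdOrthonormalBasis ℂ H).reindex (finCongr hdim) = b at hb
  refine ⟨?_, ?_, ?_⟩
  · rw [← sub_nonneg, ← hb]
    positivity
  · intro h y
    rw [h, sub_self, Finset.sum_eq_zero_iff_of_nonneg (fun i _ => by positivity)] at hb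
    have hi : ∀ i, (∑ n, (inner ℂ (φ n) (b i) : ℂ) • φ n) = ((N : ℂ) / (D : ℂ)) • b i := by
      intro i
      have := hb i (Finset.mem_univ i)
      rwa [sq_eq_zero_iff, norm_eq_zero, sub_eq_zero] at this
    let S : H →ₗ[ℂ] H := ∑ n, (innerₛₗ ℂ (φ n)).smulRight (φ n)
    have hS : ∀ y, S y = ∑ n, (inner ℂ (φ n) y : ℂ) • φ n := by
      intro y
      simp [S, LinearMap.sum_apply]
    have hE : S = ((N : ℂ) / (D : ℂ)) • LinearMap.id := by
      refine b.toBasis.ext fun i => ?_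
      simp only [OrthonormalBasis.coe_toBasis, hS, hi, LinearMap.smul_apply, LinearMap.id_apply]
    rw [← hS, hE]
    rfl
  · intro h
    rw [← sub_eq_zero, ← hb]
    simp [h]
end

section
/- Let D < N be positive integers with N ≥ 2 and let (φ_n)_{n=1}^N be an ETF(D,N) in a D-dimensional complex inner product space. Then there exists a family (φ̃_n)_{n=1}^N of unit vectors in an (N−D)-dimensional complex inner product space which is an ETF(N−D, N) and satisfies ⟨φ̃_n, φ̃_{n'}⟩ = −(D/(N−D))·⟨φ_n, φ_{n'}⟩ for all n ≠ n' (a Naimark complement of (φ_n)). -/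
open scoped BigOperators

/-- A family `(φ n)` of `N` vectors in a complex inner product space is an
equiangular tight frame `ETF(D,N)`: unit vectors, `|⟨φ n, φ n'⟩|² = (N−D)/(D(N−1))`
for `n ≠ n'`, and frame operator equal to `(N/D)·Id`. -/
def IsETF {ι E : Type*} [Fintype ι] [NormedAddCommGroup E] [InnerProductSpace ℂ E]
    (D N : ℕ) (φ : ι → E) : Prop :=
  (∀ n, ‖φ n‖ = 1) ∧
  (∀ n n', n ≠ n' →
    ‖(inner ℂ (φ n) (φ n') : ℂ)‖ ^ 2 = ((N : ℝ) - D) / (D * ((N : ℝ) - 1))) ∧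
  (∀ y : E, ∑ n, (inner ℂ (φ n) y : ℂ) • φ n = ((N : ℂ) / (D : ℂ)) • y)

/-- every `ETF(D,N)` with `D < N` admits a Naimark complement:
an `ETF(N−D, N)` `(φ̃ n)` in an `(N−D)`-dimensional space with
`⟨φ̃ n, φ̃ n'⟩ = −(D/(N−D))·⟨φ n, φ n'⟩` for `n ≠ n'`. -/
theorem stmt1 {H : Type*} [NormedAddCommGroup H] [InnerProductSpace ℂ H]
    [FiniteDimensional ℂ H] (D N : ℕ) (hD : 0 < D) (hDN : D < N) (hN : 2 ≤ N)
    (hdim : Module.finrank ℂ H = D)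
    (φ : Fin N → H) (hETF : IsETF D N φ) :
    ∃ ψ : Fin N → EuclideanSpace ℂ (Fin (N - D)),
      IsETF (N - D) N ψ ∧
      ∀ n n', n ≠ n' →
        (inner ℂ (ψ n) (ψ n') : ℂ) =
          -((D : ℂ) / ((N : ℂ) - (D : ℂ))) * (inner ℂ (φ n) (φ n') : ℂ) := by
  obtain ⟨h1, h2, h3⟩ := hETF
  have hDc : (D : ℂ) ≠ 0 := by exact_mod_cast hD.ne'
  have hNc : (N : ℂ) ≠ 0 := by
    have : N ≠ 0 := by omega
    exact_mod_cast this
  have hDr : (0 : ℝ) < D := by exact_mod_cast hD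
  have hDNr : (D : ℝ) < N := by exact_mod_cast hDN
  have hN1r : (0 : ℝ) < (N : ℝ) - 1 := by
    have : (2 : ℝ) ≤ N := by exact_mod_cast hN
    linarith
  have hNDr : (0 : ℝ) < (N : ℝ) - D := by linarith
  have hNDc : (N : ℂ) - D ≠ 0 := by
    have := hNDr.ne'
    exact_mod_cast this
  -- the analysis operator
  let A : H →ₗ[ℂ] EuclideanSpace ℂ (Fin N) :=
    { toFun := fun y => WithLp.toLp 2 (fun n => inner ℂ (φ n) y)
      map_add' := fun x y => by
        ext n
        simp [inner_add_right]
      map_smul' := fun c x => by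
        ext n
        simp [inner_smul_right] }
  have hA : ∀ y n, A y n = inner ℂ (φ n) y := fun y n => rfl
  -- its adjoint
  have hadj : ∀ (y : H) (x : EuclideanSpace ℂ (Fin N)),
      inner ℂ (A y) x = inner ℂ y (∑ n, x n • φ n) := by
    intro y x
    rw [inner_sum, PiLp.inner_apply]
    refine Finset.sum_congr rfl fun n _ => ?_
    rw [inner_smul_right, hA, RCLike.inner_apply, inner_conj_symm]
  have hAA : ∀ y z : H, inner ℂ (A y) (A z) = ((N : ℂ) / D) * inner ℂ y z := by
    intro y z
    rw [hadj]
    simp only [hA]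
    rw [h3, inner_smul_right]
  have hinj : Function.Injective A := by
    rw [← LinearMap.ker_eq_bot, LinearMap.ker_eq_bot']
    intro y hy
    have := hAA y y
    rw [hy, inner_zero_left] at this
    have h0 : (N : ℂ) / D ≠ 0 := div_ne_zero hNc hDc
    have := (mul_eq_zero.mp this.symm).resolve_left h0
    exact inner_self_eq_zero.mp this
  have hrange : Module.finrank ℂ (LinearMap.range A) = D := by
    rw [LinearMap.finrank_range_of_inj hinj, hdim]
  have hK : Module.finrank ℂ (LinearMap.range A)ᗮ = N - D := by
    have := Submodule.finrank_add_finrank_orthogonal (LinearMap.range A)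
    rw [hrange, finrank_euclideanSpace_fin] at this
    omega
  let U := ((stdOrthonormalBasis ℂ (LinearMap.range A)ᗮ).reindex (finCongr hK)).repr
  let e : Fin N → EuclideanSpace ℂ (Fin N) := fun n => EuclideanSpace.single n 1
  let v : Fin N → EuclideanSpace ℂ (Fin N) := fun n => e n - ((D : ℂ) / N) • A (φ n)
  have he : ∀ n x, inner ℂ (e n) x = x n := by
    intro n x
    simp [e, EuclideanSpace.inner_single_left]
  have he' : ∀ n m, e n m = if m = n then 1 else 0 := by
    intro n m
    simp [e, Pi.single_apply]
  have hv : ∀ n, v n ∈ (LinearMap.range A)ᗮ := by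
    intro n
    rw [Submodule.mem_orthogonal]
    rintro _ ⟨y, rfl⟩
    have : inner ℂ (A y) (e n) = inner ℂ y (φ n) := by
      rw [hadj]
      simp [he']
    simp only [v]
    rw [inner_sub_right, inner_smul_right, hAA, this]
    field_simp
    simp
  have hvK : ∀ n (x : EuclideanSpace ℂ (Fin N)), x ∈ (LinearMap.range A)ᗮ →
      inner ℂ (v n) x = x n := by
    intro n x hx
    have h0 : inner ℂ (A (φ n)) x = 0 :=
      (Submodule.mem_orthogonal _ _).mp hx _ ⟨_, rfl⟩
    simp only [v]
    rw [inner_sub_left, inner_smul_left, h0, he]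
    simp
  have hvv : ∀ n m, inner ℂ (v n) (v m) =
      (if n = m then 1 else 0) - ((D : ℂ) / N) * inner ℂ (φ n) (φ m) := by
    intro n m
    rw [hvK n _ (hv m)]
    simp only [v, PiLp.sub_apply, PiLp.smul_apply, he', hA, smul_eq_mul]
  have hsum : ∀ x ∈ (LinearMap.range A)ᗮ, ∑ n, x n • v n = x := by
    intro x hx
    have h0 : ∑ n, x n • φ n = 0 := by
      apply ext_inner_left ℂ
      intro y
      rw [← hadj, inner_zero_right]
      exact (Submodule.mem_orthogonal _ _).mp hx _ ⟨_, rfl⟩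
    have h4 : ∑ n, x n • A (φ n) = 0 := by
      have := congrArg A h0
      rw [map_sum, map_zero] at this
      simpa only [map_smul] using this
    simp only [v, smul_sub, Finset.sum_sub_distrib]
    simp_rw [smul_comm (_ : ℂ) ((D : ℂ) / N)]
    rw [← Finset.smul_sum, h4, smul_zero, sub_zero]
    ext m
    simp [he', WithLp.ofLp_sum, Finset.sum_apply]
  let w : Fin N → (LinearMap.range A)ᗮ := fun n => ⟨v n, hv n⟩
  let c : ℝ := Real.sqrt ((N : ℝ) / (N - D))
  have hc : (c : ℂ) * c = (N : ℂ) / (N - D) := by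
    have : c * c = (N : ℝ) / (N - D) := Real.mul_self_sqrt (by positivity)
    have := congrArg (fun t : ℝ => (t : ℂ)) this
    simpa using this
  let ψ : Fin N → EuclideanSpace ℂ (Fin (N - D)) := fun n => (c : ℂ) • U (w n)
  have hψ : ∀ n m, inner ℂ (ψ n) (ψ m) = ((N : ℂ) / (N - D)) *
      ((if n = m then 1 else 0) - ((D : ℂ) / N) * inner ℂ (φ n) (φ m)) := by
    intro n m
    simp only [ψ]
    rw [inner_smul_left, inner_smul_right, LinearIsometryEquiv.inner_map_map,
      Submodule.coe_inner, hvv, Complex.conj_ofReal, ← mul_assoc, hc]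
  have hoff : ∀ n n', n ≠ n' → (inner ℂ (ψ n) (ψ n') : ℂ) =
          -((D : ℂ) / ((N : ℂ) - (D : ℂ))) * (inner ℂ (φ n) (φ n') : ℂ) := by
    intro n m hnm
    rw [hψ, if_neg hnm]
    field_simp
    ring
  refine ⟨ψ, ⟨?_, ?_, ?_⟩, hoff⟩
  · intro n
    have : inner ℂ (ψ n) (ψ n) = (1 : ℂ) := by
      rw [hψ, if_pos rfl, inner_self_eq_norm_sq_to_K, h1]
      simp
      field_simp
    have h5 : ‖ψ n‖ ^ 2 = 1 := by
      rw [← inner_self_eq_norm_sq (𝕜 := ℂ), this]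
      simp
    exact (pow_eq_one_iff_of_nonneg (norm_nonneg _) two_ne_zero).mp h5
  · intro n m hnm
    rw [hoff n m hnm, norm_mul, mul_pow, h2 n m hnm]
    have : ‖-((D : ℂ) / ((N : ℂ) - (D : ℂ)))‖ = (D : ℝ) / (N - D) := by
      have h6 : -((D : ℂ) / ((N : ℂ) - (D : ℂ))) = -(((D : ℝ) / (N - D) : ℝ) : ℂ) := by
        push_cast
        rfl
      rw [h6, norm_neg, Complex.norm_real, Real.norm_of_nonneg (by positivity)]
    rw [this, Nat.cast_sub hDN.le]
    field_simp
    ring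
  · intro y
    obtain ⟨x, rfl⟩ := U.surjective y
    have h7 : ∀ n, inner ℂ (ψ n) (U x) • ψ n =
        ((N : ℂ) / (N - D)) • U ((x : EuclideanSpace ℂ (Fin N)) n • w n) := by
      intro n
      simp only [ψ]
      rw [inner_smul_left, LinearIsometryEquiv.inner_map_map, Submodule.coe_inner,
        hvK n _ x.2, Complex.conj_ofReal, smul_smul, map_smul, smul_smul, ← hc]
      congr 1
      ring
    simp_rw [h7]
    rw [← Finset.smul_sum, ← map_sum, Nat.cast_sub hDN.le]
    congr 2
    ext1
    rw [Submodule.coe_sum]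
    exact hsum x x.2
end

section
/- Let G be a finite abelian group, let H be a proper subgroup of G of order H, set N = [G:H], and let D ⊆ G be a nonempty subset with #D = D. Let (ψ_γ)_γ be the harmonic frame on D, ψ_γ(d) = D^{−1/2} γ(d). Then D is an H-relative difference set RDS(N,H,D,Λ) for G (for some integer Λ) if and only if for all characters γ₁ ≠ γ₂ of G: |⟨ψ_{γ₁}, ψ_{γ₂}⟩|² = (N−D)/(D(N−1)) whenever γ₁γ₂^{−1} ∈ H^⊥, and |⟨ψ_{γ₁}, ψ_{γ₂}⟩|² = 1/D whenever γ₁γ₂^{−1} ∉ H^⊥. In particular, partitioning the characters of G into the cosets of H^⊥ then yields H mutually unbiased ETF(D,N): the resulting family is an MUETF(D,N,H) for ℂ^D. -/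
open scoped BigOperators

/-- `𝒟` is an `H`-relative difference set with parameter `Λ` for the finite abelian
group `G`. -/
def IsRDS {G : Type*} [AddCommGroup G] [Fintype G] [DecidableEq G]
    (H : AddSubgroup G) (𝒟 : Finset G) (Λ : ℕ) : Prop :=
  (∀ g ∈ H, g ≠ 0 → ((𝒟 ×ˢ 𝒟).filter fun p => p.1 - p.2 = g).card = 0) ∧
  (∀ g : G, g ∉ H → ((𝒟 ×ˢ 𝒟).filter fun p => p.1 - p.2 = g).card = Λ)

/-- A doubly-indexed family `(ψ m n)` of unit vectors is an `MUETF(D,N,M)`: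
`M` mutually unbiased `ETF(D,N)`. -/
def IsMUETF {μ ν E : Type*} [NormedAddCommGroup E] [InnerProductSpace ℂ E]
    (D N : ℕ) (ψ : μ → ν → E) : Prop :=
  (∀ m n, ‖ψ m n‖ = 1) ∧
  (∀ m n n', n ≠ n' →
    ‖(inner ℂ (ψ m n) (ψ m n') : ℂ)‖ ^ 2 = ((N : ℝ) - D) / (D * ((N : ℝ) - 1))) ∧
  (∀ m m' n n', m ≠ m' → ‖(inner ℂ (ψ m n) (ψ m' n') : ℂ)‖ ^ 2 = 1 / (D : ℝ))


open Classical in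
lemma char_sum_H {G : Type*} [AddCommGroup G] [Fintype G] (H : AddSubgroup G)
    (χ : AddChar G ℂ) :
    ∑ g : G, (if g ∈ H then χ g else 0) =
      if (∀ h ∈ H, χ h = 1) then (Nat.card H : ℂ) else 0 := by
  have h1 := AddChar.sum_eq_ite (χ.compAddMonoidHom H.subtype)
  have h2 : (χ.compAddMonoidHom H.subtype = 0) ↔ ∀ h ∈ H, χ h = 1 := by
    rw [DFunLike.ext_iff]
    constructor
    · intro h x hx
      simpa using h ⟨x, hx⟩
    · rintro h ⟨x, hx⟩
      simpa using h x hx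
  rw [← Finset.sum_filter]
  rw [Finset.sum_subtype (p := fun x => x ∈ H) _ (by simp)]
  simp only [h2] at h1
  rw [Nat.card_eq_fintype_card]
  simpa using h1

lemma char_inj {G : Type*} [AddCommGroup G] [Fintype G] (a b : G → ℂ)
    (h : ∀ χ : AddChar G ℂ, ∑ g, a g * χ g = ∑ g, b g * χ g) : a = b := by
  classical
  have key : ∀ (c : G → ℂ) (g₀ : G),
      ∑ χ : AddChar G ℂ, χ (-g₀) * ∑ g, c g * χ g = c g₀ * Fintype.card G := by
    intro c g₀
    simp_rw [Finset.mul_sum]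
    rw [Finset.sum_comm]
    have : ∀ g, ∑ χ : AddChar G ℂ, χ (-g₀) * (c g * χ g) =
        if g = g₀ then c g * Fintype.card G else 0 := by
      intro g
      have h3 : ∀ χ : AddChar G ℂ, χ (-g₀) * (c g * χ g) = c g * χ (g - g₀) := by
        intro χ
        rw [sub_eq_add_neg, AddChar.map_add_eq_mul]; ring
      simp_rw [h3]
      rw [← Finset.mul_sum, AddChar.sum_apply_eq_ite]
      simp [sub_eq_zero]
    simp_rw [this]
    simp
  funext g
  have h1 := key a g
  simp_rw [h] at h1
  rw [key b g] at h1
  have : (Fintype.card G : ℂ) ≠ 0 := Nat.cast_ne_zero.2 Fintype.card_ne_zero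
  exact (mul_right_cancel₀ this h1).symm

/-- number of difference representations -/
def cnt {G : Type*} [AddCommGroup G] [DecidableEq G] (S : Finset G) (g : G) : ℕ :=
  ((S ×ˢ S).filter fun p => p.1 - p.2 = g).card

lemma cnt_zero {G : Type*} [AddCommGroup G] [DecidableEq G] (S : Finset G) :
    cnt S 0 = S.card := by
  unfold cnt
  rw [← Finset.diag_card S]
  congr 1
  ext ⟨x, y⟩
  simp only [Finset.mem_filter, Finset.mem_product, Finset.mem_diag, sub_eq_zero]
  constructor
  · rintro ⟨⟨h, _⟩, h'⟩; exact ⟨h, h'⟩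
  · rintro ⟨h, h'⟩
    have h'' : x = y := h'
    subst h''
    exact ⟨⟨h, h⟩, rfl⟩

lemma cnt_char {G : Type*} [AddCommGroup G] [Fintype G] [DecidableEq G] (S : Finset G)
    (χ : AddChar G ℂ) :
    ∑ g, (cnt S g : ℂ) * χ g = ((‖∑ d ∈ S, χ d‖ ^ 2 : ℝ) : ℂ) := by
  have h1 : ((‖∑ d ∈ S, χ d‖ ^ 2 : ℝ) : ℂ) = ∑ p ∈ S ×ˢ S, χ (p.1 - p.2) := by
    push_cast
    rw [← Complex.mul_conj', map_sum, Finset.sum_mul_sum, Finset.sum_product]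
    simp_rw [sub_eq_add_neg, AddChar.map_add_eq_mul, AddChar.map_neg_eq_conj]
  rw [h1, ← Finset.sum_fiberwise (S ×ˢ S) (fun p => p.1 - p.2)]
  refine Finset.sum_congr rfl fun g _ => ?_
  rw [Finset.sum_congr rfl (g := fun _ => χ g)]
  · simp [cnt]
  · intro p hp
    rw [(Finset.mem_filter.1 hp).2]

open Classical in
lemma model_char {G : Type*} [AddCommGroup G] [Fintype G] [DecidableEq G] (H : AddSubgroup G) (D l : ℂ)
    (χ : AddChar G ℂ) :
    ∑ g, ((if g = 0 then D else 0) + l * (1 - if g ∈ H then 1 else 0)) * χ g =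
      D + l * ((if χ = 1 then (Fintype.card G : ℂ) else 0) -
        if (∀ h ∈ H, χ h = 1) then (Nat.card H : ℂ) else 0) := by
  rw [← char_sum_H]
  have := AddChar.sum_eq_ite χ
  have h01 : (χ = 0) = (χ = 1) := rfl
  simp only [h01] at this
  rw [← this, ← Finset.sum_sub_distrib, Finset.mul_sum]
  simp_rw [add_mul]
  rw [Finset.sum_add_distrib]
  congr 1
  · simp [ite_mul]
  · refine Finset.sum_congr rfl fun g _ => ?_
    split_ifs <;> ring

open Classical in
lemma rds_iff {G : Type*} [AddCommGroup G] [Fintype G] [DecidableEq G] (H : AddSubgroup G)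
    (hH : H ≠ ⊤) (S : Finset G) (N : ℕ) (hN : Fintype.card G = N * Nat.card H) :
    (∃ L, IsRDS H S L) ↔ ∀ χ : AddChar G ℂ, χ ≠ 1 →
      ‖∑ d ∈ S, χ d‖ ^ 2 = if (∀ h ∈ H, χ h = 1) then
        (S.card : ℝ) * (N - S.card) / (N - 1) else (S.card : ℝ) := by
  have hHpos : (Nat.card H : ℂ) ≠ 0 := Nat.cast_ne_zero.2 Nat.card_pos.ne'
  have hN1 : (N : ℂ) - 1 ≠ 0 := by
    intro h
    have h1 : N = 1 := by exact_mod_cast sub_eq_zero.1 h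
    apply hH
    apply AddSubgroup.eq_top_of_card_eq
    rw [Nat.card_eq_fintype_card (α := G), hN, h1, one_mul]
  have hNC : (Fintype.card G : ℂ) = N * Nat.card H := by exact_mod_cast hN
  have hR : ∀ x : ℝ, ∀ χ : AddChar G ℂ,
      ‖∑ d ∈ S, χ d‖ ^ 2 = x ↔ ∑ g, (cnt S g : ℂ) * χ g = (x : ℂ) := by
    intro x χ
    rw [cnt_char]
    norm_cast
  have hone : ∑ g, (cnt S g : ℂ) * (1 : AddChar G ℂ) g = (S.card : ℂ) ^ 2 := by
    rw [cnt_char]; simp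
  constructor
  · rintro ⟨L, h0, hL⟩ χ hχ
    have hm : ∀ g, (cnt S g : ℂ) =
        (if g = 0 then (S.card : ℂ) else 0) + (L : ℂ) * (1 - if g ∈ H then 1 else 0) := by
      intro g
      by_cases hg : g = 0
      · subst hg
        simp [cnt_zero]
      · by_cases hgH : g ∈ H
        · simp [hg, hgH]
          exact_mod_cast h0 g hgH hg
        · simp [hg, hgH]
          exact_mod_cast hL g hgH
    rw [hR]
    simp_rw [hm] at hone ⊢
    rw [model_char] at hone ⊢
    simp only [hχ, if_false]
    simp [hNC, -Nat.card_eq_fintype_card] at hone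
    split_ifs with hh
    · push_cast
      field_simp
      linear_combination -hone
    · simp
  · intro h
    have hm : (fun g => (cnt S g : ℂ)) = fun g =>
        (if g = 0 then (S.card : ℂ) else 0) +
          ((S.card : ℂ) * (S.card - 1) / (Nat.card H * (N - 1))) *
          (1 - if g ∈ H then 1 else 0) := by
      apply char_inj
      intro χ
      rw [model_char]
      by_cases hχ : χ = 1
      · subst hχ
        rw [hone]
        simp [hNC, -Nat.card_eq_fintype_card]
        field_simp
        ring
      · have := h χ hχ
        rw [hR] at this
        rw [this]
        split_ifs
        · push_cast
          field_simp
          ring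
        · simp
    obtain ⟨g₀, hg₀⟩ : ∃ g, g ∉ H := by
      by_contra! hc
      exact hH ((AddSubgroup.eq_top_iff' H).2 hc)
    have ne0 : ∀ g, g ∉ H → g ≠ 0 := fun g hg h => hg (h ▸ H.zero_mem)
    refine ⟨cnt S g₀, ?_, ?_⟩
    · intro g hg h0
      have := congrFun hm g
      simp [h0, hg] at this
      exact_mod_cast this
    · intro g hg
      have h1 := congrFun hm g
      have h2 := congrFun hm g₀
      simp only [hg, hg₀, ne0 g hg, ne0 g₀ hg₀, if_false] at h1 h2
      have : (cnt S g : ℂ) = cnt S g₀ := h1.trans h2.symm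
      exact_mod_cast this

/-- the annihilator of `H` -/
def annih {G : Type*} [AddCommGroup G] (H : AddSubgroup G) : Subgroup (AddChar G ℂ) where
  carrier := {χ | ∀ h ∈ H, χ h = 1}
  one_mem' := by intro h _; simp
  mul_mem' := by
    intro a b ha hb h hh
    rw [AddChar.mul_apply, ha h hh, hb h hh, one_mul]
  inv_mem' := by
    intro a ha h hh
    rw [AddChar.inv_apply]
    exact ha _ (H.neg_mem hh)

lemma mem_annih {G : Type*} [AddCommGroup G] (H : AddSubgroup G) (χ : AddChar G ℂ) :
    χ ∈ annih H ↔ ∀ h ∈ H, χ h = 1 := Iff.rfl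

lemma inv_mul_annih {G : Type*} [AddCommGroup G] (H : AddSubgroup G) (a b : AddChar G ℂ) :
    (∀ h ∈ H, (a⁻¹ * b) h = 1) ↔ ∀ h ∈ H, a h = b h := by
  refine forall₂_congr fun h _ => ?_
  rw [AddChar.mul_apply, AddChar.inv_apply', inv_mul_eq_one₀ (a.val_isUnit h).ne_zero]

lemma card_annih {G : Type*} [AddCommGroup G] [Fintype G] (H : AddSubgroup G) :
    Nat.card H * Nat.card (annih H) = Fintype.card G := by
  classical
  have h1 : ∑ χ : AddChar G ℂ, ∑ g : G, (if g ∈ H then χ g else 0) =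
      Nat.card H * Nat.card (annih H) := by
    simp_rw [char_sum_H]
    rw [← Finset.sum_filter, Finset.sum_const, nsmul_eq_mul, mul_comm]
    congr 2
    rw [Nat.card_eq_fintype_card]
    exact (Fintype.card_of_subtype _ (by intro χ; simp [mem_annih])).symm
  rw [Finset.sum_comm] at h1
  have h2 : ∀ g : G, ∑ χ : AddChar G ℂ, (if g ∈ H then χ g else 0) =
      if g = 0 then (Fintype.card G : ℂ) else 0 := by
    intro g
    split_ifs with h h' h'
    · rw [AddChar.sum_apply_eq_ite, if_pos h']
    · rw [AddChar.sum_apply_eq_ite, if_neg h']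
    · exact absurd (h' ▸ H.zero_mem) h
    · simp
  simp_rw [h2] at h1
  rw [Finset.sum_ite_eq' Finset.univ 0 (fun _ => (Fintype.card G : ℂ)),
    if_pos (Finset.mem_univ _)] at h1
  exact_mod_cast h1.symm

lemma exists_equiv {G : Type*} [AddCommGroup G] [Fintype G] (H : AddSubgroup G)
    (M N : ℕ) (hM : M = Nat.card H) (hN : Fintype.card G = N * M) :
    ∃ e : Fin M × Fin N ≃ AddChar G ℂ, ∀ m m' n n',
      (∀ h ∈ H, e (m, n) h = e (m', n') h) ↔ m = m' := by
  have hMpos : 0 < M := hM ▸ Nat.card_pos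
  have hc := card_annih H
  have hK : Nat.card (annih H) = N := by
    rw [hN, ← hM, mul_comm] at hc
    exact Nat.eq_of_mul_eq_mul_right hMpos hc
  have hQ : Nat.card (AddChar G ℂ ⧸ annih H) = M := by
    have h1 := Subgroup.card_eq_card_quotient_mul_card_subgroup (annih H)
    rw [Nat.card_eq_fintype_card (α := AddChar G ℂ), AddChar.card_eq, hK, hN, mul_comm] at h1
    have hNpos : 0 < N := hK ▸ Nat.card_pos
    exact (Nat.eq_of_mul_eq_mul_right hNpos h1).symm
  let e1 := (Finite.equivFinOfCardEq hQ).symm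
  let e2 := (Finite.equivFinOfCardEq hK).symm
  refine ⟨(e1.prodCongr e2).trans Subgroup.groupEquivQuotientProdSubgroup.symm, ?_⟩
  have hfst : ∀ q : AddChar G ℂ ⧸ annih H, ∀ k : annih H,
      ((Subgroup.groupEquivQuotientProdSubgroup.symm (q, k) : AddChar G ℂ) :
        AddChar G ℂ ⧸ annih H) = q := by
    intro q k
    have h1 : ∀ x : AddChar G ℂ,
        (Subgroup.groupEquivQuotientProdSubgroup (s := annih H) x).1 = x := fun x => rfl
    rw [← h1, Equiv.apply_symm_apply]
  intro m m' n n'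
  rw [← inv_mul_annih, ← mem_annih, ← QuotientGroup.eq]
  simp [hfst]

lemma inner_sq {G : Type*} [AddCommGroup G] [Fintype G] [DecidableEq G] (S : Finset G) (D : ℕ)
    (ψ : AddChar G ℂ → EuclideanSpace ℂ ↥S)
    (hψ : ∀ (γ : AddChar G ℂ) (d : ↥S), ψ γ d = (Real.sqrt D : ℂ)⁻¹ * γ (d : G))
    (γ₁ γ₂ : AddChar G ℂ) :
    (inner ℂ (ψ γ₁) (ψ γ₂) : ℂ) = (D : ℂ)⁻¹ * ∑ d ∈ S, (γ₁⁻¹ * γ₂) d := by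
  rw [PiLp.inner_apply, Finset.mul_sum, ← Finset.sum_coe_sort S]
  refine Finset.sum_congr rfl fun d _ => ?_
  rw [hψ, hψ, AddChar.mul_apply, AddChar.inv_apply, AddChar.map_neg_eq_conj]
  have : ((Real.sqrt D : ℝ) : ℂ) ^ 2 = D := by
    rw [← Complex.ofReal_pow, Real.sq_sqrt (Nat.cast_nonneg D)]; simp
  simp only [RCLike.inner_apply, map_mul, map_inv₀, Complex.conj_ofReal]
  rw [← this]
  ring

/-- for the harmonic frame `(ψ γ)` on a `D`-element subset `𝒟` of a finite
abelian group `G` with proper subgroup `H` of order `H` and index `N`, `𝒟` is an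
`H`-`RDS(N,H,D,Λ)` for some `Λ` iff for all distinct characters `γ₁, γ₂`,
`|⟨ψ γ₁, ψ γ₂⟩|² = (N−D)/(D(N−1))` when `γ₁γ₂⁻¹ ∈ H^⊥` (i.e. `γ₁` and `γ₂` agree on `H`)
and `= 1/D` otherwise; in particular, partitioning the characters into the cosets of
`H^⊥` then yields an `MUETF(D,N,H)` for `ℂ^𝒟`. -/
theorem stmt4 {G : Type*} [AddCommGroup G] [Fintype G] [DecidableEq G]
    (H : AddSubgroup G) (hH : H ≠ ⊤) (Hc : ℕ) (hHc : Hc = Nat.card H)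
    (N : ℕ) (hN : Fintype.card G = N * Hc)
    (𝒟 : Finset G) (h𝒟 : 𝒟.Nonempty) (D : ℕ) (hD : D = 𝒟.card)
    (ψ : AddChar G ℂ → EuclideanSpace ℂ ↥𝒟)
    (hψ : ∀ (γ : AddChar G ℂ) (d : ↥𝒟), ψ γ d = (Real.sqrt D : ℂ)⁻¹ * γ (d : G)) :
    ((∃ Λ : ℕ, IsRDS H 𝒟 Λ) ↔
      ∀ γ₁ γ₂ : AddChar G ℂ, γ₁ ≠ γ₂ →
        ((∀ h ∈ H, γ₁ h = γ₂ h) →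
          ‖(inner ℂ (ψ γ₁) (ψ γ₂) : ℂ)‖ ^ 2 = ((N : ℝ) - D) / (D * ((N : ℝ) - 1))) ∧
        ((¬ ∀ h ∈ H, γ₁ h = γ₂ h) →
          ‖(inner ℂ (ψ γ₁) (ψ γ₂) : ℂ)‖ ^ 2 = 1 / (D : ℝ))) ∧
    ((∃ Λ : ℕ, IsRDS H 𝒟 Λ) →
      ∃ e : Fin Hc × Fin N ≃ AddChar G ℂ,
        (∀ (m : Fin Hc) (n n' : Fin N), ∀ h ∈ H, e (m, n) h = e (m, n') h) ∧
        IsMUETF D N fun (m : Fin Hc) (n : Fin N) => ψ (e (m, n))) := by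
  classical
  have hDpos : (D : ℝ) ≠ 0 := by
    rw [hD]; exact Nat.cast_ne_zero.2 h𝒟.card_pos.ne'
  have hin : ∀ (γ₁ γ₂ : AddChar G ℂ) (x : ℝ), ‖(inner ℂ (ψ γ₁) (ψ γ₂) : ℂ)‖ ^ 2 = x ↔
      ‖∑ d ∈ 𝒟, (γ₁⁻¹ * γ₂) d‖ ^ 2 = D ^ 2 * x := by
    intro γ₁ γ₂ x
    rw [inner_sq 𝒟 D ψ hψ, norm_mul, norm_inv, Complex.norm_natCast, mul_pow, inv_pow,
      inv_mul_eq_iff_eq_mul₀ (pow_ne_zero 2 hDpos)]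
  have e1 : (D : ℝ) ^ 2 * (((N : ℝ) - D) / (D * ((N : ℝ) - 1))) = D * (N - D) / (N - 1) := by
    rw [div_mul_eq_div_div, ← mul_div_assoc, ← mul_div_assoc]
    congr 1
    field_simp
  have e2 : (D : ℝ) ^ 2 * (1 / D) = D := by field_simp
  have main : (∃ Λ : ℕ, IsRDS H 𝒟 Λ) ↔
      ∀ γ₁ γ₂ : AddChar G ℂ, γ₁ ≠ γ₂ →
        ((∀ h ∈ H, γ₁ h = γ₂ h) →
          ‖(inner ℂ (ψ γ₁) (ψ γ₂) : ℂ)‖ ^ 2 = ((N : ℝ) - D) / (D * ((N : ℝ) - 1))) ∧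
        ((¬ ∀ h ∈ H, γ₁ h = γ₂ h) →
          ‖(inner ℂ (ψ γ₁) (ψ γ₂) : ℂ)‖ ^ 2 = 1 / (D : ℝ)) := by
    rw [rds_iff H hH 𝒟 N (hHc ▸ hN), ← hD]
    simp only [hin, e1, e2, ← inv_mul_annih]
    constructor
    · intro h γ₁ γ₂ hne
      have := h (γ₁⁻¹ * γ₂) (by rwa [Ne, inv_mul_eq_one])
      constructor
      · intro hh; rwa [if_pos hh] at this
      · intro hh; rwa [if_neg hh] at this
    · intro h χ hχ
      have := h 1 χ hχ.symm
      simp only [inv_one, one_mul] at this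
      split_ifs with hh
      · exact this.1 hh
      · exact this.2 hh
  refine ⟨main, fun hr => ?_⟩
  have hm := main.1 hr
  obtain ⟨e, he⟩ := exists_equiv H Hc N hHc hN
  refine ⟨e, fun m n n' => (he m m n n').2 rfl, ?_, ?_, ?_⟩
  · intro m n
    have h1 := (hin (e (m, n)) (e (m, n)) 1).2 (by simp [← hD])
    rw [inner_self_eq_norm_sq_to_K] at h1
    have h2 : (‖ψ (e (m, n))‖ ^ 2) ^ 2 = 1 := by simpa using h1
    have h3 := norm_nonneg (ψ (e (m, n)))
    rw [← pow_mul] at h2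
    exact (pow_eq_one_iff_of_nonneg h3 (by norm_num)).1 h2
  · intro m n n' hn
    exact (hm _ _ (by simpa using hn)).1 ((he m m n n').2 rfl)
  · intro m m' n n' hne
    exact (hm _ _ (by simp [hne])).2 (fun h => hne ((he m m' n n').1 h))
end

section
/- Let M ≥ 2 and N ≥ D ≥ 1 be integers, and for each m = 1,…,M let (ψ_{m,n})_{n=1}^N be an ETF(D,N) in ℂ^D. Then max{ |⟨ψ_{m,n}, ψ_{m',n'}⟩|² : m ≠ m', 1 ≤ n,n' ≤ N } ≥ 1/D, and equality holds if and only if |⟨ψ_{m,n}, ψ_{m',n'}⟩|² = 1/D for all m ≠ m' and all n, n', i.e. if and only if the combined family is an MUETF(D,N,M). -/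
open scoped BigOperators

lemma etf_sum {N D : ℕ} {φ : Fin N → EuclideanSpace ℂ (Fin D)} (h : IsETF D N φ)
    (y : EuclideanSpace ℂ (Fin D)) (hy : ‖y‖ = 1) :
    ∑ n, ‖(inner ℂ (φ n) y : ℂ)‖ ^ 2 = ∑ _n : Fin N, (1 : ℝ) / D := by
  have h1 := congrArg (fun z => (inner ℂ y z : ℂ)) (h.2.2 y)
  simp only [inner_sum, inner_smul_right, inner_self_eq_norm_sq_to_K, hy] at h1
  have h2 : ∀ n, (inner ℂ (φ n) y : ℂ) * inner ℂ y (φ n)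
      = ((‖(inner ℂ (φ n) y : ℂ)‖ ^ 2 : ℝ) : ℂ) := by
    intro n
    rw [← inner_conj_symm y (φ n), Complex.mul_conj, Complex.normSq_eq_norm_sq]
  simp only [h2] at h1
  rw [← Complex.ofReal_sum] at h1
  have h3 : (∑ n, ‖(inner ℂ (φ n) y : ℂ)‖ ^ 2) = (N : ℝ) / D := by
    have : ((∑ n, ‖(inner ℂ (φ n) y : ℂ)‖ ^ 2 : ℝ) : ℂ) = (((N : ℝ) / D : ℝ) : ℂ) := by
      rw [h1]; simp
    exact_mod_cast this
  rw [h3]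
  simp [div_eq_mul_inv]

/-- if each `(ψ m n)ₙ` is an `ETF(D,N)` in `ℂ^D` (`m = 1,…,M`, `M ≥ 2`),
then `max{|⟨ψ m n, ψ m' n'⟩|² : m ≠ m'} ≥ 1/D`, and equality holds iff
`|⟨ψ m n, ψ m' n'⟩|² = 1/D` for all `m ≠ m'`, i.e. iff the combined family is an
`MUETF(D,N,M)`. -/
theorem stmt7 (M N D : ℕ) (hM : 2 ≤ M) (hD : 1 ≤ D) (hDN : D ≤ N) (hN : 2 ≤ N)
    (ψ : Fin M → Fin N → EuclideanSpace ℂ (Fin D))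
    (hETF : ∀ m, IsETF D N (ψ m)) :
    (∃ m m' n n', m ≠ m' ∧
      (1 : ℝ) / D ≤ ‖(inner ℂ (ψ m n) (ψ m' n') : ℂ)‖ ^ 2) ∧
    ((∀ m m' n n', m ≠ m' →
        ‖(inner ℂ (ψ m n) (ψ m' n') : ℂ)‖ ^ 2 ≤ 1 / (D : ℝ)) ↔
      IsMUETF D N ψ) := by
  have key : ∀ m m' n', ∑ n, ‖(inner ℂ (ψ m n) (ψ m' n') : ℂ)‖ ^ 2
      = ∑ _n : Fin N, (1 : ℝ) / D :=
    fun m m' n' => etf_sum (hETF m) _ ((hETF m').1 n')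
  refine ⟨?_, ?_, ?_⟩
  · have hne : (Finset.univ : Finset (Fin N)).Nonempty := ⟨⟨0, by omega⟩, Finset.mem_univ _⟩
    obtain ⟨n, -, hn⟩ := Finset.exists_le_of_sum_le hne
      (key ⟨0, by omega⟩ ⟨1, by omega⟩ ⟨0, by omega⟩).ge
    exact ⟨_, _, n, _, by simp, hn⟩
  · intro hle
    refine ⟨fun m => (hETF m).1, fun m => (hETF m).2.1, fun m m' n n' hm => ?_⟩
    exact (Finset.sum_eq_sum_iff_of_le (fun i _ => hle m m' i n' hm)).1 (key m m' n') n
      (Finset.mem_univ _)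
  · intro h m m' n n' hm
    exact (h.2.2 m m' n n' hm).le
end

section
/- Let Q be a prime power, J ≥ 2 an integer, F a finite field with Q^J elements with prime subfield extension E of order Q, Tr : F → E the field trace, and α a generator of the cyclic group F^×. Let D = {d ∈ ℤ/(Q^J−1) : Tr(α^d) = 1} (well defined since α^d depends only on d mod Q^J−1). For 0 ≤ m ≤ Q−2 and 0 ≤ n ≤ (Q^J−1)/(Q−1) − 1, define ψ_{m,n} ∈ ℂ^D by ψ_{m,n}(d) = Q^{−(J−1)/2}·exp(2πi(m + (Q−1)n)d/(Q^J−1)). Then each ψ_{m,n} is a unit vector, and |⟨ψ_{m,n}, ψ_{m',n'}⟩|² = 1/Q^J whenever m = m' and n ≠ n', while |⟨ψ_{m,n}, ψ_{m',n'}⟩|² = 1/Q^{J−1} whenever m ≠ m'. That is, (ψ_{m,n}) is an MUETF(Q^{J−1}, (Q^J−1)/(Q−1), Q−1) for ℂ^D. -/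
open scoped BigOperators

set_option linter.unusedSectionVars false

lemma norm_sq_gauss {R : Type*} [Field R] [Fintype R] (χ : MulChar R ℂ) (hχ : χ ≠ 1)
    (φ : AddChar R ℂ) (hφ : φ ≠ 1) : ‖gaussSum χ φ‖ ^ 2 = Fintype.card R := by
  have h := gaussSum_mul_gaussSum_eq_card hχ (AddChar.IsPrimitive.of_ne_one hφ)
  rw [← star_gaussSum_eq] at h
  have h2 : ((‖gaussSum χ φ‖ ^ 2 : ℝ) : ℂ) = ((Fintype.card R : ℝ) : ℂ) := by
    rw [← Complex.normSq_eq_norm_sq, ← Complex.mul_conj]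
    simpa using h
  exact_mod_cast h2

section
variable {E F : Type*} [Field E] [Field F] [Fintype E] [Fintype F] [Algebra E F]

open Classical in
noncomputable def fibS (E : Type*) {F : Type*} [Field E] [Field F] [Fintype F] [Algebra E F]
    (χ : MulChar F ℂ) (c : E) : ℂ :=
  ∑ x : F with Algebra.trace E F x = c, χ x

lemma fibS_mul (χ : MulChar F ℂ) (u : Eˣ) (c : E) :
    fibS E χ (u * c) = χ (algebraMap E F u) * fibS E χ c := by
  classical
  unfold fibS
  rw [Finset.mul_sum]
  symm
  refine Finset.sum_bij' (fun x _ => algebraMap E F u * x)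
    (fun x _ => algebraMap E F ((u⁻¹ : Eˣ) : E) * x) ?_ ?_ ?_ ?_ ?_
  · intro x hx
    simp only [Finset.mem_filter, Finset.mem_univ, true_and] at hx ⊢
    rw [← Algebra.smul_def, map_smul, hx, smul_eq_mul]
  · intro x hx
    simp only [Finset.mem_filter, Finset.mem_univ, true_and] at hx ⊢
    rw [← Algebra.smul_def, map_smul, hx, smul_eq_mul]
    simp
  · intro x hx
    rw [← mul_assoc, ← map_mul]; simp
  · intro x hx
    rw [← mul_assoc, ← map_mul]; simp
  · intro x hx
    simp

lemma sum_fib (χ : MulChar F ℂ) (f : E → ℂ) :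
    ∑ x : F, χ x * f (Algebra.trace E F x) = ∑ c : E, fibS E χ c * f c := by
  classical
  unfold fibS
  rw [← Finset.sum_fiberwise (s := Finset.univ) (g := fun x : F => Algebra.trace E F x)]
  refine Finset.sum_congr rfl fun c _ => ?_
  rw [Finset.sum_mul]
  refine Finset.sum_congr rfl fun x hx => ?_
  simp only [Finset.mem_filter, Finset.mem_univ, true_and] at hx
  rw [hx]

noncomputable def trChar (F : Type*) {E : Type*} [Field E] [Field F] [Algebra E F]
    (φ : AddChar E ℂ) : AddChar F ℂ :=
  φ.compAddMonoidHom (Algebra.trace E F).toAddMonoidHom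

lemma trChar_apply (φ : AddChar E ℂ) (x : F) : trChar F φ x = φ (Algebra.trace E F x) := rfl

lemma trChar_ne (φ : AddChar E ℂ) (hφ : φ ≠ 1) : trChar F φ ≠ 1 := by
  obtain ⟨c, hc⟩ := AddChar.ne_one_iff.1 hφ
  obtain ⟨x, rfl⟩ := Algebra.trace_surjective E F c
  exact AddChar.ne_one_iff.2 ⟨x, hc⟩

noncomputable def resChar (E : Type*) {F : Type*} [Field E] [Field F] [Algebra E F]
    (χ : MulChar F ℂ) : MulChar E ℂ where
  toMonoidHom := χ.toMonoidHom.comp (algebraMap E F).toMonoidHom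
  map_nonunit' := by
    intro a ha
    have : a = 0 := by simpa using ha
    subst this
    simpa using MulChar.map_zero χ

lemma resChar_apply (χ : MulChar F ℂ) (c : E) : resChar E χ c = χ (algebraMap E F c) := rfl

lemma exists_char : ∃ φ : AddChar E ℂ, φ ≠ 1 := by
  obtain ⟨φ, h⟩ := (AddChar.exists_apply_ne_zero (a := (1 : E))).2 one_ne_zero
  exact ⟨φ, AddChar.ne_one_iff.2 ⟨1, h⟩⟩

lemma gauss_eq (χ : MulChar F ℂ) (φ : AddChar E ℂ) :
    gaussSum χ (trChar F φ) = fibS E χ 0 + fibS E χ 1 * gaussSum (resChar E χ) φ := by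
  classical
  have : gaussSum χ (trChar F φ) = ∑ c : E, fibS E χ c * φ c := sum_fib χ φ
  rw [this, gaussSum, Finset.mul_sum, ← Finset.add_sum_erase _ _ (Finset.mem_univ (0 : E)),
    ← Finset.add_sum_erase (a := (0 : E)) Finset.univ (fun i => fibS E χ 1 * _) (Finset.mem_univ (0 : E))]
  simp only [AddChar.map_zero_eq_one, mul_one, MulChar.map_zero, mul_zero, zero_add]
  congr 1
  refine Finset.sum_congr rfl fun c hc => ?_
  have hc0 : c ≠ 0 := by simpa using hc
  have := fibS_mul χ (Units.mk0 c hc0) (1 : E)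
  simp only [Units.val_mk0, mul_one] at this
  rw [this, resChar_apply]; ring

lemma key_A (χ : MulChar F ℂ) (hχ : ∃ u : Eˣ, χ (algebraMap E F u) ≠ 1) :
    ‖fibS E χ 1‖ ^ 2 * Fintype.card E = Fintype.card F := by
  obtain ⟨u, hu⟩ := hχ
  obtain ⟨φ, hφ⟩ := exists_char (E := E)
  have h0 : fibS E χ 0 = 0 := by
    have := fibS_mul χ u (0 : E)
    rw [mul_zero] at this
    have h : (χ (algebraMap E F u) - 1) * fibS E χ 0 = 0 := by linear_combination -this
    exact (mul_eq_zero.1 h).resolve_left (sub_ne_zero.2 hu)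
  have hr : resChar E χ ≠ 1 := by
    intro h
    apply hu
    rw [← resChar_apply, h, MulChar.one_apply_coe]
  have hne : χ ≠ 1 := by
    rintro rfl
    exact hu (MulChar.one_apply ((Units.isUnit u).map (algebraMap E F)))
  have h := gauss_eq χ φ
  rw [h0, zero_add] at h
  rw [← norm_sq_gauss _ hr φ hφ, ← norm_sq_gauss χ hne _ (trChar_ne φ hφ), h, norm_mul, mul_pow]

lemma key_B (χ : MulChar F ℂ) (hne : χ ≠ 1) (hχ : ∀ u : Eˣ, χ (algebraMap E F u) = 1) :
    ‖fibS E χ 1‖ ^ 2 * Fintype.card E ^ 2 = Fintype.card F := by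
  classical
  obtain ⟨φ, hφ⟩ := exists_char (E := E)
  have hr : resChar E χ = 1 := by
    ext u
    rw [resChar_apply, hχ, MulChar.one_apply_coe]
  have h := gauss_eq χ φ
  have h1 := gauss_eq χ (1 : AddChar E ℂ)
  have ht : trChar F (1 : AddChar E ℂ) = 1 := rfl
  rw [ht, gaussSum_one_right hne, hr, gaussSum_one_one, Nat.card_eq_fintype_card,
    Fintype.card_units, Nat.cast_sub Fintype.card_pos] at h1
  rw [hr, gaussSum_one_left hφ] at h
  have h2 : gaussSum χ (trChar F φ) = -(fibS E χ 1 * Fintype.card E) := by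
    rw [h]; push_cast at h1; linear_combination -h1
  rw [← norm_sq_gauss χ hne _ (trChar_ne φ hφ), h2, norm_neg, norm_mul, mul_pow]
  simp

lemma card_fib : (Nat.card {x : F // Algebra.trace E F x = 1}) * Fintype.card E = Fintype.card F := by
  classical
  obtain ⟨x₀, h₀⟩ := Algebra.trace_surjective E F 1
  have h := (Algebra.trace E F).toAddMonoidHom.ker.card_mul_index
  have e : {x : F // Algebra.trace E F x = 1} ≃ (Algebra.trace E F).toAddMonoidHom.ker :=
    { toFun := fun x => ⟨x - x₀, by
        have := x.2
        simp [AddMonoidHom.mem_ker, this, h₀]⟩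
      invFun := fun y => ⟨y + x₀, by
        have : Algebra.trace E F y = 0 := y.2
        simp [this, h₀]⟩
      left_inv := fun x => by simp
      right_inv := fun x => by simp }
  rw [Nat.card_congr e, ← Nat.card_eq_fintype_card (α := F), ← h, AddSubgroup.index_ker,
    AddMonoidHom.range_eq_top.2 (Algebra.trace_surjective E F)]
  simp
end

theorem arith_mn {a N m m' n n' : ℕ} (hm : m < a) (hm' : m' < a) (hn : n < N) (hn' : n' < N)
    (h : (m + a * n) ≡ (m' + a * n') [MOD (N * a)]) : m = m' ∧ n = n' := by
  have lt : ∀ {x y : ℕ}, x < a → y < N → x + a * y < N * a := by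
    intro x y hx hy
    calc x + a * y < a + a * y := by omega
      _ = (y + 1) * a := by ring
      _ ≤ N * a := Nat.mul_le_mul_right _ hy
  have h1 : m + a * n = m' + a * n' := by
    have := h
    rwa [Nat.ModEq, Nat.mod_eq_of_lt (lt hm hn), Nat.mod_eq_of_lt (lt hm' hn')] at this
  have h2 : m = m' := by
    have := congrArg (· % a) h1
    simpa [Nat.mod_eq_of_lt hm, Nat.mod_eq_of_lt hm'] using this
  subst h2
  refine ⟨rfl, ?_⟩
  have : a * n = a * n' := by omega
  exact Nat.eq_of_mul_eq_mul_left (by omega) this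


theorem stmt11_aux (Q J M N : ℕ) (hM : M = Q ^ J - 1) (hN : N = M / (Q - 1)) (hQ : IsPrimePow Q) (hJ : 2 ≤ J)
    {F : Type*} [Field F] [Fintype F] (hF : Fintype.card F = Q ^ J)
    (E : Subfield F) (hE : Nat.card E = Q)
    (Tr : F → F) (hTr : ∀ x, Tr x = ∑ j ∈ Finset.range J, x ^ Q ^ j)
    (α : Fˣ) (hα : ∀ u : Fˣ, u ∈ Subgroup.zpowers α)
    (𝒟 : Finset (ZMod M))
    (h𝒟 : ∀ d : ZMod M, d ∈ 𝒟 ↔ Tr ((α : F) ^ d.val) = 1)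
    (ψ : Fin (Q - 1) → Fin (N) → EuclideanSpace ℂ ↥𝒟)
    (hψ : ∀ m n (d : ↥𝒟), ψ m n d =
      ((Real.sqrt (Q ^ (J - 1)) : ℝ) : ℂ)⁻¹ *
        Complex.exp (2 * Real.pi * Complex.I *
          ((((m : ℕ) + (Q - 1) * (n : ℕ)) * (d : ZMod M).val : ℕ) : ℂ) /
          (M : ℂ))) :
    (∀ m n, ‖ψ m n‖ = 1) ∧
    (∀ m n n', n ≠ n' →
      ‖(inner ℂ (ψ m n) (ψ m n') : ℂ)‖ ^ 2 = 1 / (Q ^ J : ℝ)) ∧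
    (∀ m m' n n', m ≠ m' →
      ‖(inner ℂ (ψ m n) (ψ m' n') : ℂ)‖ ^ 2 = 1 / (Q ^ (J - 1) : ℝ)) ∧
    IsMUETF (Q ^ (J - 1)) (N) ψ := by
  classical
  have hQ2 : 2 ≤ Q := hQ.two_le
  have hQJ : Q ^ 2 ≤ Q ^ J := Nat.pow_le_pow_right (by omega) hJ
  have hQJ1 : 2 ≤ Q ^ J := by nlinarith
  have hdvd : Q - 1 ∣ Q ^ J - 1 := by simpa using Nat.sub_dvd_pow_sub_pow Q 1 J
  have hNa : N * (Q - 1) = M := by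
    rw [hN, hM]; exact Nat.div_mul_cancel hdvd
  have hpow : Q ^ J = Q ^ (J - 1) * Q := by rw [← pow_succ]; congr 1; omega
  letI : Fintype E := Fintype.ofFinite E
  have hcE : Fintype.card E = Q := by rw [← Nat.card_eq_fintype_card, hE]
  have hfr : Module.finrank E F = J := by
    have h := Module.card_eq_pow_finrank (K := E) (V := F)
    rw [hF, hcE] at h
    exact (Nat.pow_right_injective hQ2 h).symm
  have hTr' : ∀ x : F, Algebra.trace E F x = 1 ↔ Tr x = 1 := by
    intro x
    have h := FiniteField.algebraMap_trace_eq_sum_pow E F x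
    rw [hfr, hE, ← hTr] at h
    rw [← h]
    exact (map_eq_one_iff (algebraMap E F) (algebraMap E F).injective).symm
  haveI : NeZero M := ⟨by omega⟩
  have hcU : Fintype.card Fˣ = M := by rw [Fintype.card_units, hF, hM]
  have hordα : orderOf α = M := by
    rw [orderOf_eq_card_of_forall_mem_zpowers hα, Nat.card_eq_fintype_card, hcU]
  have hgen : ∀ u : Fˣ, ∃ j < M, α ^ j = u := by
    intro u
    have h1 := (mem_powers_iff_mem_zpowers (x := α)).2 (hα u)
    obtain ⟨j, hj⟩ := h1
    refine ⟨j % M, Nat.mod_lt _ (by omega), ?_⟩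
    rw [← hordα, pow_mod_orderOf]; exact hj
  have hζ := Complex.isPrimitiveRoot_exp M (by omega)
  set ζ : ℂ := Complex.exp (2 * Real.pi * Complex.I / M) with hζdef
  have hζ0 : ζ ≠ 0 := hζ.ne_zero (by omega)
  have hmem : Units.mk0 ζ hζ0 ∈ rootsOfUnity (Fintype.card Fˣ) ℂ := by
    rw [hcU, mem_rootsOfUnity]
    ext
    simpa using hζ.pow_eq_one
  obtain ⟨χ0, hχ0⟩ : ∃ χ0 : MulChar F ℂ, χ0 (α : F) = ζ :=
    ⟨MulChar.ofRootOfUnity hmem hα, by rw [MulChar.ofRootOfUnity_spec]; rfl⟩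
  have hχinj : ∀ u v : Fˣ, χ0 (u : F) = χ0 (v : F) → u = v := by
    intro u v h
    obtain ⟨i, hi, rfl⟩ := hgen u
    obtain ⟨j, hj, rfl⟩ := hgen v
    rw [Units.val_pow_eq_pow_val, Units.val_pow_eq_pow_val, map_pow, map_pow, hχ0] at h
    rw [hζ.pow_inj hi hj h]
  have hχn : ∀ u : Fˣ, ‖χ0 (u : F)‖ = 1 := by
    intro u
    obtain ⟨i, hi, rfl⟩ := hgen u
    rw [Units.val_pow_eq_pow_val, map_pow, hχ0, norm_pow, hζ.norm'_eq_one (by omega), one_pow]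
  have hmem𝒟 : ∀ d, d ∈ 𝒟 ↔ Algebra.trace E F ((α : F) ^ d.val) = 1 := fun d => by
    rw [h𝒟, hTr']
  have hsum : ∀ f : F → ℂ, ∑ d : 𝒟, f ((α : F) ^ (d : ZMod M).val) =
      ∑ x : F with Algebra.trace E F x = 1, f x := by
    intro f
    rw [Finset.sum_coe_sort 𝒟 (fun d => f ((α : F) ^ d.val))]
    refine Finset.sum_bij (fun d _ => (α : F) ^ d.val) ?_ ?_ ?_ ?_
    · intro d hd
      simpa using (hmem𝒟 d).1 hd
    · intro d _ d' _ h
      have h' : α ^ d.val = α ^ d'.val := by ext; simpa using h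
      rw [pow_inj_mod, hordα, Nat.mod_eq_of_lt (ZMod.val_lt d),
        Nat.mod_eq_of_lt (ZMod.val_lt d')] at h'
      exact ZMod.val_injective M h'
    · intro x hx
      simp only [Finset.mem_filter, Finset.mem_univ, true_and] at hx
      have hx0 : x ≠ 0 := by
        rintro rfl
        simp at hx
      obtain ⟨j, hj, hjx⟩ := hgen (Units.mk0 x hx0)
      have hjx' : (α : F) ^ j = x := by
        rw [← Units.val_pow_eq_pow_val, hjx]; rfl
      have hv : ((j : ℕ) : ZMod M).val = j := ZMod.val_cast_of_lt hj
      refine ⟨(j : ZMod M), ?_, ?_⟩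
      · rw [hmem𝒟, hv, hjx']; exact hx
      · rw [hv, hjx']
    · intro d _; rfl
  have hcard : Fintype.card 𝒟 = Q ^ (J - 1) := by
    have h1 := hsum (fun _ => 1)
    have h2 := card_fib (E := E) (F := F)
    rw [hF, hcE, hpow] at h2
    have h3 := Nat.eq_of_mul_eq_mul_right (by omega) h2
    rw [Nat.card_eq_fintype_card, Fintype.card_subtype] at h3
    simp only [Finset.sum_const, nsmul_eq_mul, mul_one, Finset.card_univ] at h1
    rw [h3] at h1
    exact_mod_cast h1
  have hDpos : (0 : ℝ) < (Q : ℝ) ^ (J - 1) := by positivity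
  set c : ℂ := ((Real.sqrt (Q ^ (J - 1)) : ℝ) : ℂ)⁻¹ with hc
  have hcn : ‖c‖ ^ 2 = ((Q : ℝ) ^ (J - 1))⁻¹ := by
    rw [hc, norm_inv, Complex.norm_real, inv_pow, Real.norm_eq_abs, sq_abs,
      Real.sq_sqrt hDpos.le]
  have hψ' : ∀ m n (d : 𝒟), ψ m n d =
      c * χ0 ((α ^ (d : ZMod M).val : Fˣ) : F) ^ ((m : ℕ) + (Q - 1) * (n : ℕ)) := by
    intro m n d
    rw [hψ, Units.val_pow_eq_pow_val, map_pow, hχ0, hζdef, ← pow_mul, ← Complex.exp_nat_mul]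
    congr 2
    push_cast
    ring
  have hunit : ∀ m n, ‖ψ m n‖ = 1 := by
    intro m n
    have : ‖ψ m n‖ ^ 2 = 1 := by
      rw [EuclideanSpace.norm_sq_eq]
      have : ∀ d : 𝒟, ‖ψ m n d‖ ^ 2 = ((Q : ℝ) ^ (J - 1))⁻¹ := by
        intro d
        rw [hψ', norm_mul, norm_pow, hχn, one_pow, mul_one, hcn]
      rw [Finset.sum_congr rfl (fun d _ => this d), Finset.sum_const, Finset.card_univ, hcard,
        nsmul_eq_mul]
      push_cast
      exact mul_inv_cancel₀ hDpos.ne'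
    exact (pow_eq_one_iff_of_nonneg (norm_nonneg _) two_ne_zero).1 this
  have hinner : ∀ m n m' n', ∃ χ : MulChar F ℂ,
      (∀ u : Fˣ, χ (u : F) = 1 ↔ ((m : Fin (Q - 1)) : ℕ) + (Q - 1) * ((n : Fin N) : ℕ) ≡
        ((m' : Fin (Q - 1)) : ℕ) + (Q - 1) * ((n' : Fin N) : ℕ) [MOD orderOf u]) ∧
      ‖(inner ℂ (ψ m n) (ψ m' n') : ℂ)‖ ^ 2 =
        (((Q : ℝ) ^ (J - 1))⁻¹) ^ 2 * ‖fibS E χ 1‖ ^ 2 := by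
    intro m n m' n'
    set k := (m : ℕ) + (Q - 1) * (n : ℕ) with hk
    set k' := (m' : ℕ) + (Q - 1) * (n' : ℕ) with hk'
    have hχu : ∀ u : Fˣ, (χ0⁻¹ ^ k * χ0 ^ k') (u : F) =
        star (χ0 (u : F) ^ k) * χ0 (u : F) ^ k' := by
      intro u
      rw [MulChar.mul_apply, MulChar.pow_apply_coe, MulChar.pow_apply_coe, star_pow,
        MulChar.star_apply']
    refine ⟨χ0⁻¹ ^ k * χ0 ^ k', ?_, ?_⟩
    · intro u
      rw [← pow_eq_pow_iff_modEq]
      have h1 : star (χ0 (u : F) ^ k) * χ0 (u : F) ^ k = 1 := by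
        have := Complex.conj_mul' (χ0 (u : F) ^ k)
        rw [norm_pow, hχn] at this
        simpa using this
      have h0 : star (χ0 (u : F) ^ k) ≠ 0 := left_ne_zero_of_mul_eq_one h1
      rw [hχu]
      constructor
      · intro h
        have h2 : χ0 (u : F) ^ k = χ0 (u : F) ^ k' := mul_left_cancel₀ h0 (h1.trans h.symm)
        apply hχinj
        rw [Units.val_pow_eq_pow_val, Units.val_pow_eq_pow_val, map_pow, map_pow, h2]
      · intro h
        have h2 : χ0 (u : F) ^ k = χ0 (u : F) ^ k' := by
          rw [← map_pow, ← map_pow, ← Units.val_pow_eq_pow_val, h, Units.val_pow_eq_pow_val]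
        rw [← h2, h1]
    · have : (inner ℂ (ψ m n) (ψ m' n') : ℂ) = (star c * c) * fibS E (χ0⁻¹ ^ k * χ0 ^ k') 1 := by
        rw [PiLp.inner_apply, fibS]
        have h2 := hsum (fun x => (χ0⁻¹ ^ k * χ0 ^ k') x)
        have h3 : ∑ x : F with Algebra.trace E F x = 1, (χ0⁻¹ ^ k * χ0 ^ k') x =
          ∑ d : 𝒟, (χ0⁻¹ ^ k * χ0 ^ k') ((α ^ (d : ZMod M).val : Fˣ) : F) := by
          rw [← h2]; simp only [Units.val_pow_eq_pow_val]
        trans (star c * c) * ∑ x : F with Algebra.trace E F x = 1, (χ0⁻¹ ^ k * χ0 ^ k') x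
        · rw [h3, Finset.mul_sum]
          refine Finset.sum_congr rfl fun d _ => ?_
          rw [hχu, hψ', hψ', RCLike.inner_apply, map_mul, starRingEnd_apply, starRingEnd_apply]
          ring
        · congr!
      rw [this, norm_mul, norm_mul, norm_star, ← pow_two, mul_pow, hcn]
  have hQpos : (0 : ℝ) < Q := by positivity
  have hpowR : (Q : ℝ) ^ J = (Q : ℝ) ^ (J - 1) * Q := by exact_mod_cast hpow
  have hsame : ∀ m n n', n ≠ n' →
      ‖(inner ℂ (ψ m n) (ψ m n') : ℂ)‖ ^ 2 = 1 / (Q ^ J : ℝ) := by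
    intro m n n' hnn
    obtain ⟨χ, h1, h2⟩ := hinner m n m n'
    have hne : χ ≠ 1 := by
      rintro rfl
      have := (h1 α).1 (MulChar.one_apply_coe α)
      rw [hordα, ← hNa] at this
      exact hnn (Fin.ext (arith_mn m.2 m.2 n.2 n'.2 this).2)
    have ht : ∀ u : Eˣ, χ (algebraMap E F u) = 1 := by
      intro u
      have hu := h1 (Units.map (algebraMap E F).toMonoidHom u)
      refine hu.2 ?_
      have hd : orderOf (Units.map (algebraMap E F).toMonoidHom u) ∣ Q - 1 := by
        refine (orderOf_map_dvd _ u).trans ?_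
        rw [← hcE, ← Fintype.card_units]
        exact orderOf_dvd_card
      refine Nat.ModEq.of_dvd hd ?_
      simp [Nat.ModEq]
    have h3 := key_B (E := E) χ hne ht
    rw [hcE, hF] at h3
    push_cast at h3
    rw [h2, hpowR]
    rw [hpowR] at h3
    field_simp
    nlinarith
  have hdiff : ∀ m m' n n', m ≠ m' →
      ‖(inner ℂ (ψ m n) (ψ m' n') : ℂ)‖ ^ 2 = 1 / (Q ^ (J - 1) : ℝ) := by
    intro m m' n n' hmm
    obtain ⟨χ, h1, h2⟩ := hinner m n m' n'
    have ht : ∃ u : Eˣ, χ (algebraMap E F u) ≠ 1 := by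
      obtain ⟨g, hg⟩ := IsCyclic.exists_generator (α := Eˣ)
      refine ⟨g, fun h => hmm ?_⟩
      have hu := (h1 (Units.map (algebraMap E F).toMonoidHom g)).1 h
      rw [orderOf_injective _ (Units.map_injective (algebraMap E F).injective),
        orderOf_eq_card_of_forall_mem_zpowers hg, Nat.card_eq_fintype_card,
        Fintype.card_units, hcE] at hu
      have : (m : ℕ) % (Q - 1) = (m' : ℕ) % (Q - 1) := by simpa [Nat.ModEq] using hu
      rw [Nat.mod_eq_of_lt m.2, Nat.mod_eq_of_lt m'.2] at this
      exact Fin.ext this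
    have h3 := key_A (E := E) χ ht
    rw [hcE, hF] at h3
    push_cast at h3
    rw [hpowR] at h3
    have h4 := mul_right_cancel₀ hQpos.ne' h3
    rw [h2, h4]
    field_simp
  refine ⟨hunit, hsame, hdiff, hunit, ?_, ?_⟩
  · intro m n n' hnn
    rw [hsame m n n' hnn]
    have hNR : (N : ℝ) * ((Q : ℝ) - 1) = (Q : ℝ) ^ (J - 1) * Q - 1 := by
      have h : ((N * (Q - 1) : ℕ) : ℝ) = ((Q ^ J - 1 : ℕ) : ℝ) := by rw [hNa, hM]
      rw [Nat.cast_mul, Nat.cast_sub (by omega), Nat.cast_sub (by omega)] at h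
      push_cast at h
      rw [h, hpowR]
    have hN1 : (N : ℝ) - 1 ≠ 0 := by
      have hlt : 1 < N := by
        have h1 := n.2
        have h2 := n'.2
        have h3 : (n : ℕ) ≠ n' := fun h => hnn (Fin.ext h)
        omega
      have : (1 : ℝ) < N := by exact_mod_cast hlt
      linarith
    rw [hpowR]
    push_cast
    rw [div_eq_div_iff (by positivity) (mul_ne_zero hDpos.ne' hN1)]
    linear_combination (-(Q : ℝ) ^ (J - 1)) * hNR
  · intro m m' n n' hmm
    rw [hdiff m m' n n' hmm]
    push_cast
    rfl

/-- for a prime power `Q`, `J ≥ 2`, `F` the field with `Q^J` elements with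
subfield `E` of order `Q`, trace `Tr`, a generator `α` of `F^×`, and
`𝒟 = {d ∈ ℤ/(Q^J−1) : Tr(α^d) = 1}`, the vectors
`ψ m n (d) = Q^{−(J−1)/2}·exp(2πi(m + (Q−1)n)d/(Q^J−1))`, for `0 ≤ m ≤ Q−2` and
`0 ≤ n ≤ (Q^J−1)/(Q−1) − 1`, are unit vectors with
`|⟨ψ m n, ψ m' n'⟩|² = 1/Q^J` when `m = m'`, `n ≠ n'`, and `= 1/Q^{J−1}` when `m ≠ m'`;
that is, they form an `MUETF(Q^{J−1}, (Q^J−1)/(Q−1), Q−1)` for `ℂ^𝒟`. -/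
theorem stmt11 (Q J : ℕ) (hQ : IsPrimePow Q) (hJ : 2 ≤ J)
    {F : Type*} [Field F] [Fintype F] (hF : Fintype.card F = Q ^ J)
    (E : Subfield F) (hE : Nat.card E = Q)
    (Tr : F → F) (hTr : ∀ x, Tr x = ∑ j ∈ Finset.range J, x ^ Q ^ j)
    (α : Fˣ) (hα : ∀ u : Fˣ, u ∈ Subgroup.zpowers α)
    (𝒟 : Finset (ZMod (Q ^ J - 1)))
    (h𝒟 : ∀ d : ZMod (Q ^ J - 1), d ∈ 𝒟 ↔ Tr ((α : F) ^ d.val) = 1)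
    (ψ : Fin (Q - 1) → Fin ((Q ^ J - 1) / (Q - 1)) → EuclideanSpace ℂ ↥𝒟)
    (hψ : ∀ m n (d : ↥𝒟), ψ m n d =
      ((Real.sqrt (Q ^ (J - 1)) : ℝ) : ℂ)⁻¹ *
        Complex.exp (2 * Real.pi * Complex.I *
          ((((m : ℕ) + (Q - 1) * (n : ℕ)) * (d : ZMod (Q ^ J - 1)).val : ℕ) : ℂ) /
          ((Q ^ J - 1 : ℕ) : ℂ))) :
    (∀ m n, ‖ψ m n‖ = 1) ∧
    (∀ m n n', n ≠ n' →
      ‖(inner ℂ (ψ m n) (ψ m n') : ℂ)‖ ^ 2 = 1 / (Q ^ J : ℝ)) ∧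
    (∀ m m' n n', m ≠ m' →
      ‖(inner ℂ (ψ m n) (ψ m' n') : ℂ)‖ ^ 2 = 1 / (Q ^ (J - 1) : ℝ)) ∧
    IsMUETF (Q ^ (J - 1)) ((Q ^ J - 1) / (Q - 1)) ψ := by
  exact stmt11_aux Q J _ _ rfl rfl hQ hJ hF E hE Tr hTr α hα 𝒟 h𝒟 ψ hψ
end

section
/- Let D₁ ≤ N₁ and D₂ ≤ N₂ be positive integers with N₁, N₂ ≥ 2 satisfying (N₁−D₁)/(D₁(N₁−1)) = (N₂−D₂)/(N₂−1). Let (φ_{n₁})_{n₁=1}^{N₁} be an ETF(D₁,N₁) in ℂ^{D₁} and let (ψ_{n₁,n₂}), n₁ = 1,…,N₁, n₂ = 1,…,N₂, be an MUETF(D₂,N₂,N₁) in ℂ^{D₂}. Then the family of tensor products (φ_{n₁} ⊗ ψ_{n₁,n₂}), indexed by (n₁,n₂) ∈ {1,…,N₁} × {1,…,N₂}, is an ETF(D₃,N₃) in ℂ^{D₁} ⊗ ℂ^{D₂} ≅ ℂ^{D₁D₂}, where D₃ = D₁D₂ and N₃ = N₁N₂; moreover N₃ − D₃ = D₁N₁(N₂−D₂)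 + (N₁−D₁), (N₃−D₃)/(D₃(N₃−1)) = (N₂−D₂)/(D₂(N₂−1)), and D₃(N₃−D₃)/(N₃−1) = D₁²·D₂(N₂−D₂)/(N₂−1). -/
open scoped BigOperators

/-- The tensor (Kronecker) product of vectors, realizing
`ℂ^{D₁} ⊗ ℂ^{D₂} ≅ ℂ^{D₁ × D₂}`; it satisfies `⟨u⊗v, u'⊗v'⟩ = ⟨u,u'⟩⟨v,v'⟩`. -/
def tensorVec {ι κ : Type*} [Fintype ι] [Fintype κ]
    (u : EuclideanSpace ℂ ι) (v : EuclideanSpace ℂ κ) :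
    EuclideanSpace ℂ (ι × κ) :=
  WithLp.toLp 2 fun p => u p.1 * v p.2

open scoped ComplexOrder in
theorem tight_of_welch {ι κ : Type*} [Fintype ι] [Fintype κ] [DecidableEq ι] [DecidableEq κ]
    (φ : ι → EuclideanSpace ℂ κ) (D N : ℕ) (hD : 0 < D) (hN : 2 ≤ N)
    (cD : Fintype.card κ = D) (cN : Fintype.card ι = N)
    (h1 : ∀ n, ‖φ n‖ = 1)
    (h2 : ∀ n n', n ≠ n' →
      ‖(inner ℂ (φ n) (φ n') : ℂ)‖ ^ 2 = ((N : ℝ) - D) / (D * ((N : ℝ) - 1)))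
    (y : EuclideanSpace ℂ κ) :
    ∑ n, (inner ℂ (φ n) y : ℂ) • φ n = ((N : ℂ) / (D : ℂ)) • y := by
  have hD0 : (D : ℂ) ≠ 0 := by exact_mod_cast hD.ne'
  have hD0' : (D : ℝ) ≠ 0 := by exact_mod_cast hD.ne'
  have hN0 : (N : ℝ) - 1 ≠ 0 := by
    have : (2 : ℝ) ≤ N := by exact_mod_cast hN
    linarith
  let P : Matrix κ ι ℂ := Matrix.of fun k n => φ n k
  have hG : ∀ n n', (P.conjTranspose * P) n n' = inner ℂ (φ n) (φ n') := by
    intro n n'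
    simp [P, Matrix.mul_apply, PiLp.inner_apply, mul_comm]
  have htr : (P * P.conjTranspose).trace = N := by
    rw [Matrix.trace_mul_comm]
    simp only [Matrix.trace, Matrix.diag, hG, inner_self_eq_norm_sq_to_K, h1]
    simp [cN]
  have htr2 : (P * P.conjTranspose * (P * P.conjTranspose)).trace = (N : ℂ) ^ 2 / D := by
    have e : (P * P.conjTranspose * (P * P.conjTranspose)).trace
        = ((P.conjTranspose * P) * (P.conjTranspose * P)).trace := by
      rw [Matrix.mul_assoc, Matrix.trace_mul_comm]
      simp only [Matrix.mul_assoc]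
    rw [e]
    have e2 : ∀ n, ((P.conjTranspose * P) * (P.conjTranspose * P)) n n
        = (((N : ℝ) / D : ℝ) : ℂ) := by
      intro n
      rw [Matrix.mul_apply]
      have e3 : ∀ n', (P.conjTranspose * P) n n' * (P.conjTranspose * P) n' n
          = ((‖(inner ℂ (φ n) (φ n') : ℂ)‖ ^ 2 : ℝ) : ℂ) := by
        intro n'
        rw [hG, hG, ← inner_conj_symm (φ n') (φ n), Complex.mul_conj, Complex.normSq_eq_norm_sq]
      simp only [e3]
      rw [← Complex.ofReal_sum]
      congr 1
      rw [← Finset.add_sum_erase _ _ (Finset.mem_univ n)]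
      rw [Finset.sum_congr rfl (fun n' hn' => h2 n n' (Finset.ne_of_mem_erase hn').symm)]
      rw [Finset.sum_const, Finset.card_erase_of_mem (Finset.mem_univ n), Finset.card_univ, cN,
        inner_self_eq_norm_sq_to_K, h1, nsmul_eq_mul, Nat.cast_sub (by omega)]
      simp
      field_simp
      ring
    simp only [Matrix.trace, Matrix.diag, e2]
    simp [cN]
    ring
  have hH : (P * P.conjTranspose).conjTranspose = P * P.conjTranspose := by
    simp [Matrix.conjTranspose_mul]
  have hA : P * P.conjTranspose = ((N : ℂ) / D) • (1 : Matrix κ κ ℂ) := by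
    rw [← sub_eq_zero, ← Matrix.trace_conjTranspose_mul_self_eq_zero_iff]
    have e : (P * P.conjTranspose - ((N : ℂ) / D) • (1 : Matrix κ κ ℂ)).conjTranspose
        = P * P.conjTranspose - ((N : ℂ) / D) • (1 : Matrix κ κ ℂ) := by
      rw [Matrix.conjTranspose_sub, hH]
      simp
    rw [e]
    simp only [Matrix.sub_mul, Matrix.mul_sub, Matrix.smul_mul, Matrix.mul_smul, Matrix.one_mul,
      Matrix.mul_one, Matrix.trace_sub, Matrix.trace_smul, htr, htr2, Matrix.trace_one, cD,
      smul_eq_mul]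
    field_simp
    ring
  ext k
  have e := congrFun (congrArg (fun M => Matrix.mulVec M (fun k => y k)) hA) k
  simp only [Matrix.smul_mulVec, Matrix.one_mulVec, ← Matrix.mulVec_mulVec] at e
  simp only [PiLp.smul_apply, WithLp.ofLp_sum, Finset.sum_apply]
  simp only [Pi.smul_apply] at e
  rw [← e]
  simp only [Matrix.mulVec, dotProduct, P, Matrix.conjTranspose_apply, PiLp.inner_apply,
    smul_eq_mul, WithLp.ofLp_smul, Pi.smul_apply]
  refine Finset.sum_congr rfl fun n _ => ?_
  rw [mul_comm]
  congr 1
  refine Finset.sum_congr rfl fun j _ => ?_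
  simp [mul_comm]

theorem inner_tensorVec {ι κ : Type*} [Fintype ι] [Fintype κ]
    (u u' : EuclideanSpace ℂ ι) (v v' : EuclideanSpace ℂ κ) :
    (inner ℂ (tensorVec u v) (tensorVec u' v') : ℂ) = inner ℂ u u' * inner ℂ v v' := by
  simp only [tensorVec, PiLp.inner_apply, Fintype.sum_prod_type, Finset.sum_mul_sum]
  refine Finset.sum_congr rfl fun i _ => Finset.sum_congr rfl fun j _ => ?_
  simp
  ring

/-- if `(N₁−D₁)/(D₁(N₁−1)) = (N₂−D₂)/(N₂−1)`, `(φ n₁)` is an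
`ETF(D₁,N₁)` in `ℂ^{D₁}` and `(ψ n₁ n₂)` is an `MUETF(D₂,N₂,N₁)` in `ℂ^{D₂}`, then
`(φ n₁ ⊗ ψ n₁ n₂)` is an `ETF(D₃,N₃)` in `ℂ^{D₁} ⊗ ℂ^{D₂} ≅ ℂ^{D₁D₂}` with `D₃ = D₁D₂`,
`N₃ = N₁N₂`, and moreover `N₃ − D₃ = D₁N₁(N₂−D₂) + (N₁−D₁)`,
`(N₃−D₃)/(D₃(N₃−1)) = (N₂−D₂)/(D₂(N₂−1))`, and
`D₃(N₃−D₃)/(N₃−1) = D₁²·D₂(N₂−D₂)/(N₂−1)`. -/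
theorem stmt12 (D₁ N₁ D₂ N₂ : ℕ)
    (hD₁ : 0 < D₁) (h₁ : D₁ ≤ N₁) (hN₁ : 2 ≤ N₁)
    (hD₂ : 0 < D₂) (h₂ : D₂ ≤ N₂) (hN₂ : 2 ≤ N₂)
    (hcons : ((N₁ : ℝ) - D₁) / (D₁ * ((N₁ : ℝ) - 1)) = ((N₂ : ℝ) - D₂) / ((N₂ : ℝ) - 1))
    (φ : Fin N₁ → EuclideanSpace ℂ (Fin D₁)) (hφ : IsETF D₁ N₁ φ)
    (ψ : Fin N₁ → Fin N₂ → EuclideanSpace ℂ (Fin D₂)) (hψ : IsMUETF D₂ N₂ ψ) :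
    IsETF (D₁ * D₂) (N₁ * N₂)
      (fun p : Fin N₁ × Fin N₂ => tensorVec (φ p.1) (ψ p.1 p.2)) ∧
    N₁ * N₂ - D₁ * D₂ = D₁ * N₁ * (N₂ - D₂) + (N₁ - D₁) ∧
    ((N₁ * N₂ : ℝ) - D₁ * D₂) / ((D₁ * D₂ : ℝ) * ((N₁ * N₂ : ℝ) - 1)) =
      ((N₂ : ℝ) - D₂) / (D₂ * ((N₂ : ℝ) - 1)) ∧
    (D₁ * D₂ : ℝ) * ((N₁ * N₂ : ℝ) - D₁ * D₂) / ((N₁ * N₂ : ℝ) - 1) =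
      (D₁ : ℝ) ^ 2 * ((D₂ : ℝ) * ((N₂ : ℝ) - D₂) / ((N₂ : ℝ) - 1)) := by
  have a1 : (0 : ℝ) < D₁ := by exact_mod_cast hD₁
  have a2 : (0 : ℝ) < D₂ := by exact_mod_cast hD₂
  have b1 : (2 : ℝ) ≤ N₁ := by exact_mod_cast hN₁
  have b2 : (2 : ℝ) ≤ N₂ := by exact_mod_cast hN₂
  have c1 : (N₁ : ℝ) - 1 ≠ 0 := by linarith
  have c2 : (N₂ : ℝ) - 1 ≠ 0 := by linarith
  have c3 : (N₁ * N₂ : ℝ) - 1 ≠ 0 := by nlinarith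
  have key : ((N₁ : ℝ) - D₁) * (N₂ - 1) = (N₂ - D₂) * (D₁ * (N₁ - 1)) := by
    rwa [div_eq_div_iff (by positivity) c2] at hcons
  have key3 : ((N₁ * N₂ : ℝ) - D₁ * D₂) * (N₂ - 1) = D₁ * (N₁ * N₂ - 1) * (N₂ - D₂) := by
    linear_combination (N₂ : ℝ) * key
  have r3 : ((N₁ * N₂ : ℝ) - D₁ * D₂) / ((D₁ * D₂ : ℝ) * ((N₁ * N₂ : ℝ) - 1)) =
      ((N₂ : ℝ) - D₂) / (D₂ * ((N₂ : ℝ) - 1)) := by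
    rw [div_eq_div_iff (by positivity) (by positivity)]
    linear_combination (D₂ : ℝ) * key3
  have i1 : ∀ p : Fin N₁ × Fin N₂, ‖tensorVec (φ p.1) (ψ p.1 p.2)‖ = 1 := by
    intro p
    have e := inner_tensorVec (φ p.1) (φ p.1) (ψ p.1 p.2) (ψ p.1 p.2)
    simp only [inner_self_eq_norm_sq_to_K, hφ.1, hψ.1] at e
    have e' : ‖tensorVec (φ p.1) (ψ p.1 p.2)‖ ^ 2 = 1 := by
      have : ((‖tensorVec (φ p.1) (ψ p.1 p.2)‖ : ℂ)) ^ 2 = 1 := by simpa using e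
      exact_mod_cast this
    nlinarith [norm_nonneg (tensorVec (φ p.1) (ψ p.1 p.2))]
  have i2 : ∀ p p' : Fin N₁ × Fin N₂, p ≠ p' →
      ‖(inner ℂ (tensorVec (φ p.1) (ψ p.1 p.2)) (tensorVec (φ p'.1) (ψ p'.1 p'.2)) : ℂ)‖ ^ 2
      = (((N₁ * N₂ : ℕ) : ℝ) - (D₁ * D₂ : ℕ)) / ((D₁ * D₂ : ℕ) * (((N₁ * N₂ : ℕ) : ℝ) - 1)) := by
    rintro ⟨m, n⟩ ⟨m', n'⟩ hne
    push_cast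
    rw [r3, inner_tensorVec, norm_mul, mul_pow]
    by_cases hm : m = m'
    · subst hm
      have hn : n ≠ n' := fun h => hne (by rw [h])
      rw [hψ.2.1 m n n' hn, inner_self_eq_norm_sq_to_K, hφ.1]
      simp
    · rw [hψ.2.2 m m' n n' hm, hφ.2.1 m m' hm, hcons]
      field_simp
  refine ⟨⟨i1, i2, ?_⟩, ?_, r3, ?_⟩
  · exact tight_of_welch _ _ _ (Nat.mul_pos hD₁ hD₂) (by nlinarith) (by simp) (by simp) i1 i2
  · have hle : D₁ * D₂ ≤ N₁ * N₂ := Nat.mul_le_mul h₁ h₂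
    have : ((N₁ * N₂ - D₁ * D₂ : ℕ) : ℝ) = ((D₁ * N₁ * (N₂ - D₂) + (N₁ - D₁) : ℕ) : ℝ) := by
      push_cast [Nat.cast_sub hle, Nat.cast_sub h₁, Nat.cast_sub h₂]
      linear_combination key
    exact_mod_cast this
  · field_simp
    linear_combination key3
end
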